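/- For every n ≥ 1, the map bht2dep from binary head trees with n leaves to dependency trees on n words is surjective onto the set of projective dependency trees on n words; consequently there exists an injective function Φ from the set of projective dependency trees on n words to the set of BHTs with n leaves such that bht2dep(Φ(t)) = t for every projective dependency tree t (Theorem 1 of the paper: every projective dependency tree corresponds to a BHT, bijectively onto the image of Φ). -/

import Mathlib

/-- Binary head trees (BHTs). -/
inductive BHT : Type where
  | leaf : BHT
  | nodeL (l r : BHT) : BHT
  | nodeR (l r : BHT) : BHT

/-- Number of leaves of a BHT. -/
def BHT.numLeaves : BHT → ℕ
  | .leaf => 1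
  | .nodeL l r => l.numLeaves + r.numLeaves
  | .nodeR l r => l.numLeaves + r.numLeaves

/-- Head position of a BHT whose span of leaf positions starts at `i`. -/
def BHT.headAt : BHT → ℕ → ℕ
  | .leaf, i => i
  | .nodeL l _, i => l.headAt i
  | .nodeR l r, i => r.headAt (i + l.numLeaves)

/-- Head position of a BHT placed over positions `0, …, numLeaves - 1`. -/
def BHT.head (T : BHT) : ℕ := T.headAt 0

/-- Arc set of a BHT whose span of leaf positions starts at `i`. -/
def BHT.arcsAt : BHT → ℕ → Set (ℕ × ℕ)
  | .leaf, _ => ∅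
  | .nodeL l r, i =>
      insert (l.headAt i, r.headAt (i + l.numLeaves)) (l.arcsAt i ∪ r.arcsAt (i + l.numLeaves))
  | .nodeR l r, i =>
      insert (r.headAt (i + l.numLeaves), l.headAt i) (l.arcsAt i ∪ r.arcsAt (i + l.numLeaves))

/-- Arc set of a BHT placed over positions `0, …, numLeaves - 1`. -/
def BHT.arcs (T : BHT) : Set (ℕ × ℕ) := T.arcsAt 0

/-- `S` is a subtree of `T` (placed over positions `0, …, numLeaves - 1`) whose
leaf span starts at absolute position `i`. -/
inductive BHT.SubtreeAt : BHT → ℕ → BHT → Prop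
  | refl (T : BHT) : BHT.SubtreeAt T 0 T
  | inlL (l r S : BHT) (i : ℕ) : BHT.SubtreeAt l i S → BHT.SubtreeAt (BHT.nodeL l r) i S
  | inrL (l r S : BHT) (i : ℕ) :
      BHT.SubtreeAt r i S → BHT.SubtreeAt (BHT.nodeL l r) (l.numLeaves + i) S
  | inlR (l r S : BHT) (i : ℕ) : BHT.SubtreeAt l i S → BHT.SubtreeAt (BHT.nodeR l r) i S
  | inrR (l r S : BHT) (i : ℕ) :
      BHT.SubtreeAt r i S → BHT.SubtreeAt (BHT.nodeR l r) (l.numLeaves + i) S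

/-- `bht2dep T j = some i` if `i` is the unique position with `(i, j) ∈ arcs T`,
and `none` if `j` has no incoming arc. -/
noncomputable def bht2dep (n : ℕ) (T : BHT) : Fin n → Option (Fin n) := fun j =>
  letI := Classical.dec (∃! i : Fin n, ((i : ℕ), (j : ℕ)) ∈ T.arcs)
  if h : ∃! i : Fin n, ((i : ℕ), (j : ℕ)) ∈ T.arcs then some h.choose else none

/-- `head` is a dependency tree on `n` words: exactly one root (position with
`head r = none`), and every position reaches the root by iterating `head`. -/
def IsDepTree {n : ℕ} (head : Fin n → Option (Fin n)) : Prop :=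
  ∃ r : Fin n, head r = none ∧ (∀ r' : Fin n, head r' = none → r' = r) ∧
    ∀ j : Fin n, Relation.ReflTransGen (fun a b => head a = some b) j r

/-- A dependency tree is projective if every position's set of descendants is an
interval of consecutive positions. -/
def Projective {n : ℕ} (head : Fin n → Option (Fin n)) : Prop :=
  ∀ i : Fin n, ∃ a b : Fin n,
    ∀ j : Fin n, Relation.ReflTransGen (fun x y => head x = some y) j i ↔ (a ≤ j ∧ j ≤ b)

/-- The six hexatags: `tL`/`tR` are terminal tags (leaf that is a left/right child);
`leftL`/`leftR` are `⇐L`/`⇐R` (internal left child with head-label L/R);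
`rightL`/`rightR` are `⇒L`/`⇒R` (internal right child with head-label L/R). -/
inductive Hexatag : Type where
  | tL | tR | leftL | leftR | rightL | rightR
deriving DecidableEq

/-- A hexatag is terminal if it is `tL` or `tR`. -/
def Hexatag.isTerminal : Hexatag → Prop
  | .tL => True
  | .tR => True
  | _ => False

/-- In-order linearization; the Boolean records whether the current subtree is a
right child of its parent (the root counts as a left child by convention). -/
def BHT.hexatagsAux : BHT → Bool → List Hexatag
  | .leaf, false => [.tL]
  | .leaf, true => [.tR]
  | .nodeL l r, b =>
      l.hexatagsAux false ++ (if b then Hexatag.rightL else Hexatag.leftL) :: r.hexatagsAux true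
  | .nodeR l r, b =>
      l.hexatagsAux false ++ (if b then Hexatag.rightR else Hexatag.leftR) :: r.hexatagsAux true

/-- The hexatag linearization of a BHT. -/
def BHT.hexatags (T : BHT) : List Hexatag := T.hexatagsAux false

/-- The tags emitted for the leaves of a BHT, in left-to-right order. -/
def BHT.leafTagsAux : BHT → Bool → List Hexatag
  | .leaf, false => [.tL]
  | .leaf, true => [.tR]
  | .nodeL l r, _ => l.leafTagsAux false ++ r.leafTagsAux true
  | .nodeR l r, _ => l.leafTagsAux false ++ r.leafTagsAux true

/-- The tags emitted for the leaves of a BHT in left-to-right order (root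
counts as a left child by convention). -/
def BHT.leafTags (T : BHT) : List Hexatag := T.leafTagsAux false

/-- Partial BHTs: binary head trees possibly containing a dummy placeholder. -/
inductive PBHT : Type where
  | dummy : PBHT
  | leaf : PBHT
  | nodeL (l r : PBHT) : PBHT
  | nodeR (l r : PBHT) : PBHT
deriving DecidableEq

/-- Does a partial BHT contain a dummy? -/
def PBHT.hasDummy : PBHT → Bool
  | .dummy => true
  | .leaf => false
  | .nodeL l r => l.hasDummy || r.hasDummy
  | .nodeR l r => l.hasDummy || r.hasDummy

/-- Substitute `u` for the dummy in a partial BHT. -/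
def PBHT.subst : PBHT → PBHT → PBHT
  | .dummy, u => u
  | .leaf, _ => .leaf
  | .nodeL l r, u => .nodeL (l.subst u) (r.subst u)
  | .nodeR l r, u => .nodeR (l.subst u) (r.subst u)

/-- One step of the left-corner decoder on a stack of partial BHTs. -/
def hexStep : List PBHT → Hexatag → Option (List PBHT)
  | st, .tL => some (.leaf :: st)
  | t :: st, .tR => if t.hasDummy then some (t.subst .leaf :: st) else none
  | t :: st, .leftL => some (.nodeL t .dummy :: st)
  | t :: st, .leftR => some (.nodeR t .dummy :: st)
  | t :: u :: st, .rightL =>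
      if u.hasDummy then some (u.subst (.nodeL t .dummy) :: st) else none
  | t :: u :: st, .rightR =>
      if u.hasDummy then some (u.subst (.nodeR t .dummy) :: st) else none
  | _, _ => none

/-- The left-corner decoder: run the stack operations; succeed iff every
operation is defined and the final stack is a single dummy-free tree. -/
def tags2bht (τ : List Hexatag) : Option PBHT :=
  match τ.foldlM hexStep ([] : List PBHT) with
  | some [t] => if t.hasDummy then none else some t
  | _ => none

/-- Embedding of BHTs into partial BHTs. -/
def BHT.toPBHT : BHT → PBHT
  | .leaf => .leaf
  | .nodeL l r => .nodeL l.toPBHT r.toPBHT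
  | .nodeR l r => .nodeR l.toPBHT r.toPBHT

/-- Stack-count increment of a hexatag. -/
def Hexatag.delta : Hexatag → ℤ
  | .tL => 1
  | .tR => 0
  | .leftL => 0
  | .leftR => 0
  | .rightL => -1
  | .rightR => -1

/-- Running stack count `sₖ` after the first `k` tags of `τ`. -/
def stackCount (τ : List Hexatag) (k : ℕ) : ℤ :=
  ((τ.take k).map Hexatag.delta).sum

/-- Validity of a hexatag list (0-indexed: Lean index `k` is 1-indexed position `k+1`). -/
def ValidTags (τ : List Hexatag) : Prop :=
  (τ.length % 2 = 1 ∧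
    ∀ k : ℕ, ∀ t : Hexatag, τ[k]? = some t →
      (k % 2 = 0 → t.isTerminal) ∧ (k % 2 = 1 → ¬ t.isTerminal)) ∧
  τ[0]? = some Hexatag.tL ∧
  (∀ k : ℕ, ∀ t : Hexatag, τ[k]? = some t →
    (t = Hexatag.rightL ∨ t = Hexatag.rightR) → 2 ≤ stackCount τ k) ∧
  stackCount τ τ.length = 1

open Relation in
theorem BHT.exists_of_rel (R : ℕ → ℕ → Prop) (hf : ∀ x y z, R x y → R x z → y = z)
    (hac : ∀ x, ¬ TransGen R x x)
    (hconv : ∀ c x y z, x ≤ y → y ≤ z → ReflTransGen R x c → ReflTransGen R z c →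
      ReflTransGen R y c) :
    ∀ m i r, i ≤ r → r < i + m → (∀ j, i ≤ j → j < i + m → ReflTransGen R j r) →
      (∀ j k, i ≤ j → j < i + m → j ≠ r → R j k → i ≤ k ∧ k < i + m) →
      ∃ T : BHT, T.numLeaves = m ∧ T.headAt i = r ∧
        ∀ a b, (a, b) ∈ T.arcsAt i ↔ (i ≤ b ∧ b < i + m ∧ b ≠ r ∧ R b a) := by
  intro m
  induction m using Nat.strong_induction_on with
  | _ m ih =>
  intro i r hir hrm hreach hclosed
  -- the ancestor of `e` directly below the root `r`
  have hchild : ∀ e, i ≤ e → e < i + m → e ≠ r → ∃ c, i ≤ c ∧ c < i + m ∧ c ≠ r ∧ R c r ∧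
      ReflTransGen R e c ∧ ¬ ReflTransGen R r c := by
    intro e he1 he2 her
    rcases (hreach e he1 he2).cases_tail with h | ⟨c, hec, hcr⟩
    · exact absurd h.symm her
    have hrc : ¬ ReflTransGen R r c := fun h => hac c (TransGen.head' hcr h)
    have : i ≤ c ∧ c < i + m := by
      clear her
      induction hec using ReflTransGen.head_induction_on with
      | refl => exact ⟨he1, he2⟩
      | head h1 h2 ih2 =>
        rename_i x y
        have hxr : x ≠ r := by
          rintro rfl
          exact hrc (ReflTransGen.head h1 h2)
        have := hclosed x y he1 he2 hxr h1
        exact ih2 this.1 this.2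
    exact ⟨c, this.1, this.2, fun h => hrc (h ▸ .refl), hcr, hec, hrc⟩
  have hstep : ∀ c j k, ReflTransGen R j c → j ≠ c → R j k → ReflTransGen R k c := by
    intro c j k hj hjc hjk
    rcases hj.cases_head with h | ⟨k', h1, h2⟩
    · exact absurd h hjc
    · rwa [hf _ _ _ hjk h1]
  by_cases hlast : r < i + m - 1
  · obtain ⟨c, hc1, hc2, hcr, hRc, hec, hrc⟩ :=
      hchild (i + m - 1) (by omega) (by omega) (by omega)
    classical
    have hex : ∃ k, i ≤ k ∧ ReflTransGen R k c := ⟨c, hc1, .refl⟩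
    obtain ⟨s, hs⟩ : ∃ s, s = Nat.find hex := ⟨_, rfl⟩
    have hs1 : i ≤ s ∧ ReflTransGen R s c := hs ▸ Nat.find_spec hex
    have hs2 : ∀ k, i ≤ k → k < s → ¬ ReflTransGen R k c := fun k h1 h2 h3 =>
      Nat.find_min hex (hs ▸ h2) ⟨h1, h3⟩
    have hs3 : ∀ k, s ≤ k → k < i + m → ReflTransGen R k c := fun k h1 h2 =>
      hconv c s k (i + m - 1) h1 (by omega) hs1.2 hec
    have hrs : r < s := by
      by_contra h
      exact hrc (hs3 r (by omega) hrm)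
    have hsc : s ≤ c := by
      by_contra h
      exact hs2 c hc1 (by omega) .refl
    obtain ⟨l, hl1, hl2, hl3⟩ := ih (s - i) (by omega) i r hir (by omega)
      (fun j h1 h2 => hreach j h1 (by omega)) (by
        intro j k h1 h2 h3 h4
        have h5 := hclosed j k h1 (by omega) h3 h4
        refine ⟨h5.1, ?_⟩
        by_contra h6
        exact hs2 j h1 (by omega) (ReflTransGen.head h4 (hs3 k (by omega) h5.2)))
    obtain ⟨q, hq1, hq2, hq3⟩ := ih (i + m - s) (by omega) s c hsc (by omega)
      (fun j h1 h2 => hs3 j h1 (by omega)) (by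
        intro j k h1 h2 h3 h4
        have h5 := hclosed j k (by omega) (by omega) (by omega) h4
        have h6 := hstep c j k (hs3 j h1 (by omega)) h3 h4
        refine ⟨?_, by omega⟩
        by_contra h7
        exact hs2 k h5.1 (by omega) h6)
    have e1 : i + (s - i) = s := by omega
    refine ⟨.nodeL l q, by simp only [BHT.numLeaves]; omega, by simpa [BHT.headAt] using hl2, ?_⟩
    intro a b
    simp only [BHT.arcsAt, hl1, e1, hl2, hq2, Set.mem_insert_iff, Set.mem_union, hl3, hq3,
      Prod.mk.injEq]
    constructor
    · rintro (⟨rfl, rfl⟩ | ⟨h1, h2, h3, h4⟩ | ⟨h1, h2, h3, h4⟩)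
      · exact ⟨hc1, hc2, hcr, hRc⟩
      · exact ⟨h1, by omega, h3, h4⟩
      · exact ⟨by omega, by omega, by omega, h4⟩
    · rintro ⟨h1, h2, h3, h4⟩
      by_cases hbc : b = c
      · subst hbc
        exact Or.inl ⟨hf _ _ _ h4 hRc, rfl⟩
      · by_cases hbs : b < s
        · exact Or.inr (Or.inl ⟨h1, hbs, h3, h4⟩)
        · exact Or.inr (Or.inr ⟨by omega, by omega, hbc, h4⟩)
  by_cases hfirst : i < r
  · obtain ⟨c, hc1, hc2, hcr, hRc, hec, hrc⟩ :=
      hchild i (by omega) (by omega) (by omega)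
    classical
    have hex : ∃ k, i ≤ k ∧ ¬ ReflTransGen R k c := ⟨r, hir, hrc⟩
    obtain ⟨s, hs⟩ : ∃ s, s = Nat.find hex := ⟨_, rfl⟩
    have hs1 : i ≤ s ∧ ¬ ReflTransGen R s c := hs ▸ Nat.find_spec hex
    have hs2 : ∀ k, i ≤ k → k < s → ReflTransGen R k c := fun k h1 h2 => by
      by_contra h3
      exact Nat.find_min hex (hs ▸ h2) ⟨h1, h3⟩
    have hs3 : ∀ k, s ≤ k → k < i + m → ¬ ReflTransGen R k c := fun k h1 h2 h3 =>
      hs1.2 (hconv c i s k hs1.1 h1 hec h3)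
    have hrs : s ≤ r := by
      by_contra h
      exact hrc (hs2 r hir (by omega))
    have hsc : c < s := by
      by_contra h
      exact hs3 c (by omega) hc2 .refl
    obtain ⟨q, hq1, hq2, hq3⟩ := ih (i + m - s) (by omega) s r hrs (by omega)
      (fun j h1 h2 => hreach j (by omega) (by omega)) (by
        intro j k h1 h2 h3 h4
        have h5 := hclosed j k (by omega) (by omega) h3 h4
        refine ⟨?_, by omega⟩
        by_contra h6
        exact hs3 j h1 (by omega) (ReflTransGen.head h4 (hs2 k h5.1 (by omega))))
    obtain ⟨l, hl1, hl2, hl3⟩ := ih (s - i) (by omega) i c hc1 (by omega)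
      (fun j h1 h2 => hs2 j h1 (by omega)) (by
        intro j k h1 h2 h3 h4
        have h5 := hclosed j k (by omega) (by omega) (by omega) h4
        have h6 := hstep c j k (hs2 j h1 (by omega)) h3 h4
        refine ⟨h5.1, ?_⟩
        by_contra h7
        exact hs3 k (by omega) h5.2 h6)
    have e1 : i + (s - i) = s := by omega
    refine ⟨.nodeR l q, by simp only [BHT.numLeaves]; omega,
      by simp [BHT.headAt, hl1, e1, hq2], ?_⟩
    intro a b
    simp only [BHT.arcsAt, hl1, e1, hl2, hq2, Set.mem_insert_iff, Set.mem_union, hl3, hq3,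
      Prod.mk.injEq]
    constructor
    · rintro (⟨rfl, rfl⟩ | ⟨h1, h2, h3, h4⟩ | ⟨h1, h2, h3, h4⟩)
      · exact ⟨hc1, hc2, hcr, hRc⟩
      · exact ⟨h1, by omega, by omega, h4⟩
      · exact ⟨by omega, by omega, h3, h4⟩
    · rintro ⟨h1, h2, h3, h4⟩
      by_cases hbc : b = c
      · subst hbc
        exact Or.inl ⟨hf _ _ _ h4 hRc, rfl⟩
      · by_cases hbs : b < s
        · exact Or.inr (Or.inl ⟨h1, hbs, hbc, h4⟩)
        · exact Or.inr (Or.inr ⟨by omega, by omega, h3, h4⟩)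
  · refine ⟨.leaf, by simp only [BHT.numLeaves]; omega, by simp only [BHT.headAt]; omega, ?_⟩
    intro a b
    simp only [BHT.arcsAt, Set.mem_empty_iff_false, false_iff]
    rintro ⟨h1, h2, h3, h4⟩
    omega

open Relation in
theorem bht2dep_exists (n : ℕ) (t : Fin n → Option (Fin n)) (ht : IsDepTree t)
    (hp : Projective t) : ∃ T : BHT, T.numLeaves = n ∧ bht2dep n T = t := by
  obtain ⟨r, hr, hru, hreach⟩ := ht
  let R : ℕ → ℕ → Prop := fun x y => ∃ (hx : x < n) (hy : y < n), t ⟨x, hx⟩ = some ⟨y, hy⟩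
  have hRF : ∀ x y : Fin n, R x y ↔ t x = some y := fun x y =>
    ⟨fun ⟨_, _, h⟩ => h, fun h => ⟨x.2, y.2, h⟩⟩
  have hf : ∀ x y z, R x y → R x z → y = z := by
    rintro x y z ⟨_, _, h1⟩ ⟨_, _, h2⟩
    rw [h1] at h2
    simpa using h2
  have hto : ∀ x y : Fin n, ReflTransGen (fun a b => t a = some b) x y → ReflTransGen R x y := by
      intro x y h
      induction h with
      | refl => exact .refl
      | tail h1 h2 ih => exact ih.tail ((hRF _ _).2 h2)
  have hfrom : ∀ (c : Fin n) (x : ℕ), ReflTransGen R x c →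
      ∃ hx : x < n, ReflTransGen (fun a b => t a = some b) ⟨x, hx⟩ c := by
    intro c x h
    induction h using ReflTransGen.head_induction_on with
    | refl => exact ⟨c.2, .refl⟩
    | head h1 h2 ih =>
      obtain ⟨hx, hy, h⟩ := h1
      obtain ⟨_, h3⟩ := ih
      exact ⟨hx, ReflTransGen.head h h3⟩
  have hrn : ∀ y, ¬ R r y := by
    rintro y ⟨_, _, h⟩
    simp [hr] at h
  have hac : ∀ x, ¬ TransGen R x x := by
    intro x hx
    have hxn : x < n := by
      obtain ⟨y, ⟨h, _⟩, _⟩ := TransGen.head'_iff.1 hx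
      exact h
    have hxr := hto ⟨x, hxn⟩ r (hreach _)
    simp only at hxr
    clear hxn
    induction hxr using ReflTransGen.head_induction_on with
    | refl =>
      obtain ⟨y, h, _⟩ := TransGen.head'_iff.1 hx
      exact hrn y h
    | head h1 h2 ih =>
      obtain ⟨y, h, h3⟩ := TransGen.head'_iff.1 hx
      obtain rfl := hf _ _ _ h1 h
      exact ih (TransGen.tail' h3 h1)
  have hconv : ∀ c x y z, x ≤ y → y ≤ z → ReflTransGen R x c → ReflTransGen R z c →
      ReflTransGen R y c := by
    intro c x y z hxy hyz hx hz
    by_cases hc : c < n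
    · obtain ⟨hx1, hx2⟩ := hfrom ⟨c, hc⟩ x hx
      obtain ⟨hz1, hz2⟩ := hfrom ⟨c, hc⟩ z hz
      obtain ⟨a, b, hab⟩ := hp ⟨c, hc⟩
      have h1 := ((hab _).1 hx2).1
      have h2 := ((hab _).1 hz2).2
      exact hto ⟨y, by omega⟩ ⟨c, hc⟩ ((hab _).2
        ⟨h1.trans (by simpa using hxy), le_trans (by simpa using hyz) h2⟩)
    · have key : ∀ w, ReflTransGen R w c → c = w := by
        intro w hw
        rcases hw.cases_tail with h | ⟨d, _, _, h, _⟩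
        · exact h
        · exact absurd h hc
      have h1 := key x hx
      have h2 := key z hz
      have : y = c := by omega
      rw [this]
  obtain ⟨T, h1, h2, h3⟩ := BHT.exists_of_rel R hf hac hconv n 0 r (Nat.zero_le _) (by simp)
    (fun j _ hj => hto ⟨j, by omega⟩ r (hreach _)) (by
      rintro j k _ _ _ ⟨_, h, _⟩
      omega)
  refine ⟨T, h1, ?_⟩
  have h4 : ∀ i j : Fin n, ((i : ℕ), (j : ℕ)) ∈ T.arcs ↔ t j = some i := by
    intro i j
    rw [BHT.arcs, h3, ← hRF]
    refine ⟨fun h => h.2.2.2, fun h => ⟨Nat.zero_le _, by simp, ?_, h⟩⟩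
    intro hjr
    rw [hjr] at h
    exact hrn _ h
  funext j
  unfold bht2dep
  simp only
  split_ifs with h
  · exact ((h4 _ _).1 h.choose_spec.1).symm
  · cases hj : t j with
    | none => rfl
    | some i =>
      exact absurd ⟨i, (h4 i j).2 hj, fun k hk => by
        have := (h4 k j).1 hk
        rw [hj] at this
        simpa using this.symm⟩ h

theorem bht2dep_surjective_onto_projective (n : ℕ) (hn : 1 ≤ n) :
    (∀ t : Fin n → Option (Fin n), IsDepTree t → Projective t →
      ∃ T : BHT, T.numLeaves = n ∧ bht2dep n T = t) ∧
    ∃ Φ : {t : Fin n → Option (Fin n) // IsDepTree t ∧ Projective t} → BHT,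
      Function.Injective Φ ∧
      ∀ t : {t : Fin n → Option (Fin n) // IsDepTree t ∧ Projective t},
        (Φ t).numLeaves = n ∧ bht2dep n (Φ t) = t.val := by
  refine ⟨bht2dep_exists n, ?_⟩
  choose Φ hΦ using fun t : {t : Fin n → Option (Fin n) // IsDepTree t ∧ Projective t} =>
    bht2dep_exists n t.1 t.2.1 t.2.2
  refine ⟨Φ, fun s t h => Subtype.ext ?_, hΦ⟩
  rw [← (hΦ s).2, ← (hΦ t).2, h]
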